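/- A subgroup Ŝ of M̂ = PGL(2,ℤ) is a Neumann subgroup if and only if the right action of τ on the right coset space Ŝ\M̂ (given by Ŝg ↦ Ŝgτ) has exactly two orbits, both of which are infinite, and the map Ŝg ↦ Ŝgν exchanges these two orbits. -/

import Mathlib

open Matrix Pointwise

noncomputable section

abbrev GL2Z := Matrix.GeneralLinearGroup (Fin 2) ℤ

/-- The subgroup {±I} of GL(2,ℤ), which is its center. -/
def pmI : Subgroup GL2Z := Subgroup.zpowers (-1)

instance pmI_normal : pmI.Normal := by
  constructor
  rintro n hn g
  obtain ⟨k, hk⟩ := Subgroup.mem_zpowers_iff.mp hn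
  have hc : Commute ((-1 : GL2Z) ^ k) g := (Commute.neg_one_left g).zpow_left k
  have : g * n * g⁻¹ = n := by
    rw [← hk, ← hc.eq]; group
  rw [this]; exact hn

/-- The extended modular group PGL(2,ℤ) = GL(2,ℤ)/{±I}. -/
abbrev Mhat := GL2Z ⧸ pmI

def pr : GL2Z →* Mhat := QuotientGroup.mk' pmI

def tauGL : GL2Z := ⟨!![1,1;0,1], !![1,-1;0,1], by decide, by decide⟩
def nuGL : GL2Z := ⟨!![-1,0;0,1], !![-1,0;0,1], by decide, by decide⟩
def omegaGL : GL2Z := ⟨!![0,-1;1,0], !![0,1;-1,0], by decide, by decide⟩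
def phiGL : GL2Z := ⟨!![0,-1;1,1], !![1,1;-1,0], by decide, by decide⟩

/-- τ, the class of [[1,1],[0,1]]. -/
def tau : Mhat := pr tauGL
/-- ν, the class of [[-1,0],[0,1]]. -/
def nu : Mhat := pr nuGL
/-- ω, the class of [[0,-1],[1,0]]. -/
def omega : Mhat := pr omegaGL
/-- φ, the class of [[0,-1],[1,1]]. -/
def phi : Mhat := pr phiGL

/-- T̂ = ⟨τ, ν⟩, the stabilizer of ∞. -/
def That : Subgroup Mhat := Subgroup.closure {tau, nu}

/-- A Neumann subgroup of the extended modular group: a complement of T̂. -/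
def IsNeumann (S : Subgroup Mhat) : Prop :=
  (S : Set Mhat) * (That : Set Mhat) = Set.univ ∧ S ⊓ That = ⊥

/-- The modular group PSL(2,ℤ), as the subgroup of PGL(2,ℤ) of classes of
matrices of determinant one. -/
def Msub : Subgroup Mhat :=
  Subgroup.map pr (MonoidHom.ker (Matrix.GeneralLinearGroup.det))

/-- The right coset space S\G. -/
abbrev RC {G : Type*} [Group G] (S : Subgroup G) := Quotient (QuotientGroup.rightRel S)

/-- Right multiplication on the right coset space: Sg ↦ Sgh. -/
def rmul {G : Type*} [Group G] (S : Subgroup G) (h : G) : RC S → RC S :=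
  Quotient.map' (· * h) (fun a b hab => by
    rw [QuotientGroup.rightRel_apply] at hab ⊢
    have : b * h * (a * h)⁻¹ = b * a⁻¹ := by group
    rw [this]; exact hab)

/-- The orbit of a right coset under right multiplication by powers of τ. -/
def tauOrbit (S : Subgroup Mhat) (x : RC S) : Set (RC S) :=
  {y | ∃ n : ℤ, rmul S (tau ^ n) x = y}

/-- The natural map from the right coset space (Shat ∩ M)\M to the right coset
space Shat\M̂, sending Sg to Shatg. -/
def cosetMap (S : Subgroup Mhat) : RC ((S ⊓ Msub).subgroupOf Msub) → RC S :=
  Quotient.map' Subtype.val (fun a b hab => by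
    rw [QuotientGroup.rightRel_apply] at hab ⊢
    rw [Subgroup.mem_subgroupOf] at hab
    exact (Subgroup.mem_inf.mp (by exact_mod_cast hab)).1)



def UGL (n : ℤ) : GL2Z := ⟨!![1,n;0,1], !![1,-n;0,1], by
  ext i j; fin_cases i <;> fin_cases j <;> simp [Matrix.mul_apply, Fin.sum_univ_two], by
  ext i j; fin_cases i <;> fin_cases j <;> simp [Matrix.mul_apply, Fin.sum_univ_two]⟩

theorem UGL_mul (m n : ℤ) : UGL m * UGL n = UGL (m + n) := by
  apply Units.ext
  ext i j
  fin_cases i <;> fin_cases j <;>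
    simp [UGL, Matrix.mul_apply, Fin.sum_univ_two, add_comm]

theorem UGL_zero : UGL 0 = 1 := by
  apply Units.ext
  ext i j
  fin_cases i <;> fin_cases j <;> simp [UGL]

theorem tauGL_zpow (n : ℤ) : tauGL ^ n = UGL n := by
  have h : tauGL = UGL 1 := by
    apply Units.ext
    rfl
  induction n using Int.induction_on with
  | zero => rw [_root_.zpow_zero, UGL_zero]
  | succ k ih => rw [_root_.zpow_add_one, ih, h, UGL_mul]
  | pred k ih =>
    rw [_root_.zpow_sub_one, ih, mul_inv_eq_iff_eq_mul, h, UGL_mul, sub_add_cancel]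

theorem pr_eq_one {g : GL2Z} (h : pr g = 1) : g = 1 ∨ g = -1 := by
  have h' : g ∈ pmI := (QuotientGroup.eq_one_iff g).mp h
  obtain ⟨k, rfl⟩ := Subgroup.mem_zpowers_iff.mp h'
  rcases Int.even_or_odd k with hk | hk
  · left; exact hk.neg_one_zpow
  · right; exact hk.neg_one_zpow

theorem tau_zpow_eq_one {n : ℤ} (h : tau ^ n = 1) : n = 0 := by
  have h1 : pr (UGL n) = 1 := by rw [← tauGL_zpow, map_zpow]; exact h
  rcases pr_eq_one h1 with h | h
  · have := congrArg (fun g : GL2Z => (g : Matrix (Fin 2) (Fin 2) ℤ) 0 1) h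
    simpa [UGL] using this
  · have := congrArg (fun g : GL2Z => (g : Matrix (Fin 2) (Fin 2) ℤ) 0 1) h
    simpa [UGL] using this

theorem tau_zpow_mul_nu_ne {n : ℤ} (h : tau ^ n * nu = 1) : False := by
  have h1 : pr (UGL n * nuGL) = 1 := by rw [← tauGL_zpow, map_mul, map_zpow]; exact h
  rcases pr_eq_one h1 with h | h
  · have := congrArg (fun g : GL2Z => (g : Matrix (Fin 2) (Fin 2) ℤ) 0 0) h
    simp [UGL, nuGL, Matrix.mul_apply, Fin.sum_univ_two] at this
  · have := congrArg (fun g : GL2Z => (g : Matrix (Fin 2) (Fin 2) ℤ) 1 1) h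
    simp [UGL, nuGL, Matrix.mul_apply, Fin.sum_univ_two] at this

theorem nu_mul_nu : nu * nu = 1 := by
  have : nuGL * nuGL = 1 := by
    apply Units.ext
    ext i j
    fin_cases i <;> fin_cases j <;> simp [nuGL]
  rw [nu, ← map_mul, this, map_one]

theorem tau_zpow_mul_nu (n : ℤ) : tau ^ n * nu = nu * tau ^ (-n) := by
  have : tauGL ^ n * nuGL = nuGL * tauGL ^ (-n) := by
    rw [tauGL_zpow, tauGL_zpow]
    apply Units.ext
    ext i j
    fin_cases i <;> fin_cases j <;>
      simp [UGL, nuGL, Matrix.mul_apply, Fin.sum_univ_two]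
  rw [nu, tau, ← map_zpow, ← map_zpow, ← map_mul, this, map_mul]

theorem tau_mem (n : ℤ) : tau ^ n ∈ That :=
  zpow_mem (Subgroup.subset_closure (by simp)) n

theorem nu_mem : nu ∈ That := Subgroup.subset_closure (by simp)

theorem mem_That {g : Mhat} (h : g ∈ That) :
    ∃ n : ℤ, g = tau ^ n ∨ g = nu * tau ^ n := by
  have hinv : nu⁻¹ = nu := inv_eq_of_mul_eq_one_left nu_mul_nu
  induction h using Subgroup.closure_induction with
  | mem x hx =>
    rcases hx with rfl | rfl
    · exact ⟨1, by simp⟩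
    · exact ⟨0, by simp⟩
  | one => exact ⟨0, by simp⟩
  | mul x y _ _ hx hy =>
    obtain ⟨m, hm⟩ := hx
    obtain ⟨n, hn⟩ := hy
    rcases hm with rfl | rfl <;> rcases hn with rfl | rfl
    · exact ⟨m + n, Or.inl (_root_.zpow_add _ _ _).symm⟩
    · refine ⟨-m + n, Or.inr ?_⟩
      rw [← mul_assoc, tau_zpow_mul_nu, mul_assoc, _root_.zpow_add]
    · exact ⟨m + n, Or.inr (by rw [_root_.zpow_add, mul_assoc])⟩
    · refine ⟨-m + n, Or.inl ?_⟩
      rw [← mul_assoc, mul_assoc nu, tau_zpow_mul_nu, ← mul_assoc, nu_mul_nu, one_mul, _root_.zpow_add]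
  | inv x _ hx =>
    obtain ⟨m, hm⟩ := hx
    rcases hm with rfl | rfl
    · exact ⟨-m, Or.inl (_root_.zpow_neg _ _).symm⟩
    · refine ⟨m, Or.inr ?_⟩
      rw [_root_.mul_inv_rev, ← _root_.zpow_neg, hinv, tau_zpow_mul_nu, neg_neg]

def cmk (S : Subgroup Mhat) (g : Mhat) : RC S := Quotient.mk'' g

theorem cmk_eq {S : Subgroup Mhat} {g h : Mhat} : cmk S g = cmk S h ↔ h * g⁻¹ ∈ S := by
  unfold cmk
  rw [Quotient.eq'', QuotientGroup.rightRel_apply]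

theorem rmul_cmk (S : Subgroup Mhat) (h g : Mhat) : rmul S h (cmk S g) = cmk S (g * h) := rfl

theorem cmk_surj {S : Subgroup Mhat} (x : RC S) : ∃ g, x = cmk S g := by
  induction x using Quotient.inductionOn' with
  | h g => exact ⟨g, rfl⟩

theorem mem_tauOrbit {S : Subgroup Mhat} {g : Mhat} {y : RC S} :
    y ∈ tauOrbit S (cmk S g) ↔ ∃ n : ℤ, cmk S (g * tau ^ n) = y := Iff.rfl

theorem self_mem_tauOrbit {S : Subgroup Mhat} (g : Mhat) : cmk S g ∈ tauOrbit S (cmk S g) :=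
  ⟨0, by rw [rmul_cmk]; simp⟩

theorem tauOrbit_eq {S : Subgroup Mhat} {x y : RC S} (h : y ∈ tauOrbit S x) :
    tauOrbit S x = tauOrbit S y := by
  obtain ⟨g, rfl⟩ := cmk_surj x
  obtain ⟨m, rfl⟩ := h
  ext z
  rw [rmul_cmk, mem_tauOrbit, mem_tauOrbit]
  constructor
  · rintro ⟨n, rfl⟩
    exact ⟨-m + n, by rw [mul_assoc, ← _root_.zpow_add]; simp⟩
  · rintro ⟨n, rfl⟩
    exact ⟨m + n, by rw [mul_assoc, ← _root_.zpow_add]⟩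

theorem image_nu (S : Subgroup Mhat) (g : Mhat) :
    rmul S nu '' tauOrbit S (cmk S g) = tauOrbit S (cmk S (g * nu)) := by
  ext z
  rw [mem_tauOrbit]
  constructor
  · rintro ⟨_, ⟨n, rfl⟩, rfl⟩
    exact ⟨-n, by rw [rmul_cmk, rmul_cmk, mul_assoc, mul_assoc, tau_zpow_mul_nu]⟩
  · rintro ⟨n, rfl⟩
    refine ⟨_, ⟨-n, rfl⟩, ?_⟩
    rw [rmul_cmk, rmul_cmk, mul_assoc, mul_assoc, tau_zpow_mul_nu, neg_neg]

theorem infinite_orbit_iff (S : Subgroup Mhat) (g : Mhat)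
    (h : ∀ n : ℤ, g * tau ^ n * g⁻¹ ∈ S → n = 0) : (tauOrbit S (cmk S g)).Infinite := by
  have : tauOrbit S (cmk S g) = Set.range (fun n : ℤ => cmk S (g * tau ^ n)) := rfl
  rw [this]
  apply Set.infinite_range_of_injective
  intro m n hmn
  have h1 := cmk_eq.mp hmn
  have h2 : g * tau ^ n * (g * tau ^ m)⁻¹ = g * tau ^ (n - m) * g⁻¹ := by group
  rw [h2] at h1
  have := h _ h1
  omega

theorem tau_of_infinite (S : Subgroup Mhat) (h : (tauOrbit S (cmk S 1)).Infinite)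
    (n : ℤ) (hn : tau ^ n ∈ S) : n = 0 := by
  by_contra h0
  apply h
  have hsub : tauOrbit S (cmk S 1) ⊆ (fun k : ℤ => cmk S (tau ^ k)) '' (Set.Ico 0 |n|) := by
    rintro _ ⟨m, rfl⟩
    refine ⟨m % n, ⟨Int.emod_nonneg _ h0, Int.emod_lt_abs _ h0⟩, ?_⟩
    change cmk S _ = _
    rw [rmul_cmk, one_mul, cmk_eq, ← _root_.zpow_neg, ← _root_.zpow_add]
    have : m + -(m % n) = n * (m / n) := by
      have := Int.emod_add_mul_ediv m n
      linarith
    rw [this, _root_.zpow_mul]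
    exact zpow_mem hn _
  exact ((Set.finite_Ico _ _).image _).subset hsub

theorem forward_dir (S : Subgroup Mhat) (h : IsNeumann S) :
    tauOrbit S (cmk S 1) ∪ tauOrbit S (cmk S nu) = Set.univ ∧
      Disjoint (tauOrbit S (cmk S 1)) (tauOrbit S (cmk S nu)) ∧
      (tauOrbit S (cmk S 1)).Infinite ∧ (tauOrbit S (cmk S nu)).Infinite ∧
      rmul S nu '' tauOrbit S (cmk S 1) = tauOrbit S (cmk S nu) ∧
      rmul S nu '' tauOrbit S (cmk S nu) = tauOrbit S (cmk S 1) := by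
  obtain ⟨h1, h2⟩ := h
  have h2' : ∀ g, g ∈ S → g ∈ That → g = 1 := fun g hS hT => by
    have : g ∈ S ⊓ That := ⟨hS, hT⟩
    rwa [h2, Subgroup.mem_bot] at this
  refine ⟨?_, ?_, ?_, ?_, ?_, ?_⟩
  · rw [Set.eq_univ_iff_forall]
    intro z
    obtain ⟨g, rfl⟩ := cmk_surj z
    have hg : g ∈ (S : Set Mhat) * (That : Set Mhat) := by rw [h1]; trivial
    obtain ⟨s, hs, t, ht, rfl⟩ := hg
    have key : cmk S t = cmk S (s * t) := by rw [cmk_eq]; simpa using hs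
    change cmk S (s * t) ∈ _
    rw [← key]
    obtain ⟨n, rfl | rfl⟩ := mem_That ht
    · left; exact ⟨n, by rw [rmul_cmk, one_mul]⟩
    · right; exact ⟨n, rfl⟩
  · rw [Set.disjoint_left]
    rintro _ ⟨m, rfl⟩ ⟨n, hn⟩
    rw [rmul_cmk, rmul_cmk, cmk_eq, one_mul] at hn
    have h3 := h2' _ hn (mul_mem (tau_mem _) (inv_mem (mul_mem nu_mem (tau_mem _))))
    rw [mul_inv_eq_one] at h3
    apply tau_zpow_mul_nu_ne (n := -n - m)
    rw [sub_eq_add_neg, add_comm, _root_.zpow_add, mul_assoc, tau_zpow_mul_nu, neg_neg, ← h3, ← _root_.zpow_add]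
    simp
  · apply infinite_orbit_iff
    intro n hn
    rw [one_mul, inv_one, mul_one] at hn
    exact tau_zpow_eq_one (h2' _ hn (tau_mem _))
  · apply infinite_orbit_iff
    intro n hn
    have h3 := h2' _ hn (mul_mem (mul_mem nu_mem (tau_mem _)) (inv_mem nu_mem))
    rw [mul_inv_eq_one, mul_eq_left] at h3
    exact tau_zpow_eq_one h3
  · rw [image_nu, one_mul]
  · rw [image_nu, nu_mul_nu]

theorem backward_dir (S : Subgroup Mhat) (x y : RC S)
    (hu : tauOrbit S x ∪ tauOrbit S y = Set.univ)
    (hd : Disjoint (tauOrbit S x) (tauOrbit S y))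
    (hx : (tauOrbit S x).Infinite)
    (he : rmul S nu '' tauOrbit S x = tauOrbit S y)
    (h1 : cmk S 1 ∈ tauOrbit S x) : IsNeumann S := by
  rw [tauOrbit_eq h1] at hu hd hx he
  rw [image_nu, one_mul] at he
  rw [← he] at hu hd
  constructor
  · rw [Set.eq_univ_iff_forall]
    intro g
    have hg : cmk S g ∈ tauOrbit S (cmk S 1) ∪ tauOrbit S (cmk S nu) := by rw [hu]; trivial
    rcases hg with ⟨n, hn⟩ | ⟨n, hn⟩
    · rw [rmul_cmk, cmk_eq, one_mul] at hn
      exact ⟨_, hn, _, tau_mem n, by simp⟩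
    · rw [rmul_cmk, cmk_eq] at hn
      exact ⟨_, hn, _, mul_mem nu_mem (tau_mem n), inv_mul_cancel_right _ _⟩
  · rw [eq_bot_iff]
    rintro g ⟨hS, hT⟩
    rw [Subgroup.mem_bot]
    obtain ⟨n, rfl | rfl⟩ := mem_That hT
    · rw [tau_of_infinite S hx n hS, _root_.zpow_zero]
    · exfalso
      refine Set.disjoint_left.mp hd (self_mem_tauOrbit 1) ⟨n, ?_⟩
      rw [rmul_cmk, cmk_eq, one_mul]
      exact inv_mem hS

/-- A subgroup Ŝ of M̂ = PGL(2,ℤ) is a Neumann subgroup iff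
the right action of τ on the right coset space Ŝ\M̂ has exactly two orbits,
both infinite, and right multiplication by ν exchanges these two orbits. -/
theorem isNeumann_iff_two_infinite_tau_orbits (Shat : Subgroup Mhat) :
    IsNeumann Shat ↔ ∃ x y : RC Shat,
      tauOrbit Shat x ∪ tauOrbit Shat y = Set.univ ∧
      Disjoint (tauOrbit Shat x) (tauOrbit Shat y) ∧
      (tauOrbit Shat x).Infinite ∧ (tauOrbit Shat y).Infinite ∧
      rmul Shat nu '' tauOrbit Shat x = tauOrbit Shat y ∧
      rmul Shat nu '' tauOrbit Shat y = tauOrbit Shat x := by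
  constructor
  · intro h
    exact ⟨_, _, forward_dir Shat h⟩
  · rintro ⟨x, y, hu, hd, hx, hy, h1, h2⟩
    have h : cmk Shat 1 ∈ tauOrbit Shat x ∪ tauOrbit Shat y := by rw [hu]; trivial
    rcases h with h | h
    · exact backward_dir Shat x y hu hd hx h1 h
    · exact backward_dir Shat y x (by rw [Set.union_comm]; exact hu) hd.symm hy h2 h
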